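/- Let x ∈ ℕ^6 be nondecreasing with odd coordinate sum satisfying E(x): x_2 ≡ x_1, x_4 ≡ x_3, and x_5 ≡ x_4 + x_1 (mod 2). If x' is obtained from x by a move decreasing two positive coordinates by 1 each and reordering to nondecreasing order, then E(x') fails. -/

import Mathlib

/-- The parity condition `E`: `x₂ ≡ x₁`, `x₄ ≡ x₃`, `x₅ ≡ x₄ + x₁ (mod 2)`. -/
def condE (x : Fin 6 → ℕ) : Prop :=
  x 1 % 2 = x 0 % 2 ∧ x 3 % 2 = x 2 % 2 ∧ x 4 % 2 = (x 3 + x 0) % 2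

theorem perm_ge_le (σ : Equiv.Perm (Fin 6)) (t : Fin 6) : ∃ s, t ≤ s ∧ σ s ≤ t := by
  by_contra! h
  have h1 : (Finset.Ici t).card ≤ (Finset.Ioi t).card :=
    Finset.card_le_card_of_injOn σ (fun s hs => by simpa using h s (by simpa using hs))
      σ.injective.injOn
  simp only [Fin.card_Ici, Fin.card_Ioi] at h1
  omega

theorem perm_le_ge (σ : Equiv.Perm (Fin 6)) (t : Fin 6) : ∃ s, s ≤ t ∧ t ≤ σ s := by
  by_contra! h
  have h1 : (Finset.Iic t).card ≤ (Finset.Iio t).card :=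
    Finset.card_le_card_of_injOn σ (fun s hs => by simpa using h s (by simpa using hs))
      σ.injective.injOn
  simp only [Fin.card_Iic, Fin.card_Iio] at h1
  omega

/-- If a nondecreasing `x ∈ ℕ⁶` with odd sum satisfies `E`, and `x'` is
obtained from `x` by a move (decreasing two positive coordinates by one each)
followed by re-sorting into nondecreasing order, then `E(x')` fails. -/
theorem E_breaks_after_move (x x' : Fin 6 → ℕ) (i j : Fin 6)
    (hmono : Monotone x) (hsum : Odd (∑ t, x t)) (hE : condE x)
    (hij : i ≠ j) (hi : 0 < x i) (hj : 0 < x j)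
    (σ : Equiv.Perm (Fin 6))
    (hmove : ∀ t, x' t = if σ t = i ∨ σ t = j then x (σ t) - 1 else x (σ t))
    (hmono' : Monotone x') :
    ¬ condE x' := by
  intro hE'
  have hb : ∀ t, x' t ≤ x (σ t) ∧ x (σ t) ≤ x' t + 1 := by
    intro t
    rw [hmove t]
    split_ifs <;> omega
  have hle : ∀ t, x' t ≤ x t := by
    intro t
    obtain ⟨s, h1, h2⟩ := perm_ge_le σ t
    exact (hmono' h1).trans ((hb s).1.trans (hmono h2))
  have hge : ∀ t, x t ≤ x' t + 1 := by
    intro t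
    obtain ⟨s, h1, h2⟩ := perm_le_ge σ t
    have := hmono' h1
    have := hmono h2
    have := (hb s).2
    omega
  have hs : ∑ t, x' t + 2 = ∑ t, x t := by
    have e1 : ∑ t, x' t = ∑ t, (if t = i ∨ t = j then x t - 1 else x t) := by
      rw [← Equiv.sum_comp σ (fun t => if t = i ∨ t = j then x t - 1 else x t)]
      exact Finset.sum_congr rfl fun t _ => hmove t
    have e2 : ∑ t : Fin 6, ((if t = i then 1 else 0) + (if t = j then 1 else 0)) = 2 := by
      simp [Finset.sum_add_distrib]
    rw [e1, ← e2, ← Finset.sum_add_distrib]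
    refine Finset.sum_congr rfl fun t _ => ?_
    by_cases h1 : t = i
    · subst h1
      simp [hij]
      omega
    · by_cases h2 : t = j
      · subst h2
        simp [h1]
        omega
      · simp [h1, h2]
  obtain ⟨a1, a2, a3⟩ := hE
  obtain ⟨b1, b2, b3⟩ := hE'
  rw [Nat.odd_iff] at hsum
  simp only [Fin.sum_univ_six] at hs hsum
  have hd : ∀ t, x t = x' t ∨ x t = x' t + 1 := by
    intro t
    have := hle t
    have := hge t
    omega
  have h5 := hd 5
  clear hle hge hb hmove hmono hmono' hi hj hij
  rcases hd 0 with d0 | d0 <;> rcases hd 1 with d1 | d1 <;> rcases hd 2 with d2 | d2 <;>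
    rcases hd 3 with d3 | d3 <;> rcases hd 4 with d4 | d4 <;> omega
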